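/- Let A be a unital simple C*-algebra with a unique tracial state τ, and let E_A be the additive subgroup of ℝ generated by the set {(τ⊗Tr)(p) : p a projection in M_n(A) for some n ≥ 1} (this subgroup is the image τ_*(K_0(A)) of K-theory under the trace and contains ℤ). Then F(A) ⊆ IM_+(E_A); in particular, λ·E_A = E_A for every λ ∈ F(A) and F(A) ⊆ E_A ∩ E_A^{-1} ∩ ℝ_{>0}. -/

import Mathlib

open scoped Matrix ComplexOrder

section CommonDefs

variable (A : Type*) [CStarAlgebra A]

/-- `τ` is a tracial state on the unital C*-algebra `A`. -/
structure IsTracialState (τ : A →ₗ[ℂ] ℂ) : Prop where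
  map_one : τ 1 = 1
  nonneg : ∀ a : A, 0 ≤ τ (star a * a)
  tracial : ∀ a b : A, τ (a * b) = τ (b * a)

/-- `A` is simple: every closed two-sided ideal is trivial. -/
def IsSimpleCStarAlgebra : Prop :=
  ∀ I : TwoSidedIdeal A, IsClosed (I : Set A) → I = ⊥ ∨ I = ⊤

/-- `φ` is a *-isomorphism from `A` onto the corner `p Mₙ(A) p`. -/
def IsCornerIso {n : ℕ} (p : Matrix (Fin n) (Fin n) A)
    (φ : A → Matrix (Fin n) (Fin n) A) : Prop :=
  Function.Injective φ ∧
  (∀ a b : A, φ (a + b) = φ a + φ b) ∧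
  (∀ a b : A, φ (a * b) = φ a * φ b) ∧
  (∀ (c : ℂ) (a : A), φ (c • a) = c • φ a) ∧
  (∀ a : A, φ (star a) = star (φ a)) ∧
  Set.range φ = {x : Matrix (Fin n) (Fin n) A | p * x * p = x}

/-- The fundamental group of a unital simple C*-algebra with unique tracial state `τ`:
the set of values `(τ ⊗ Tr)(p)` over projections `p ∈ Mₙ(A)` whose corner `p Mₙ(A) p`
is *-isomorphic to `A`. -/
def fundamentalGroup (τ : A →ₗ[ℂ] ℂ) : Set ℝ :=
  {t : ℝ | ∃ (n : ℕ) (p : Matrix (Fin n) (Fin n) A), 0 < n ∧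
    p * p = p ∧ star p = p ∧ (∃ φ, IsCornerIso A p φ) ∧
    (∑ i, τ (p i i)) = (t : ℂ)}

end CommonDefs

/-- The positive inner multiplier group of an additive subgroup `E` of `ℝ`:
`IM₊(E) = {t > 0 | t ∈ E, t⁻¹ ∈ E, tE = E}`. -/
def IMplus (E : AddSubgroup ℝ) : Set ℝ :=
  {t : ℝ | 0 < t ∧ t ∈ E ∧ t⁻¹ ∈ E ∧ (fun x => t * x) '' (E : Set ℝ) = (E : Set ℝ)}

/-- The set of trace values `(τ ⊗ Tr)(p)` of projections `p ∈ Mₙ(A)`, `n ≥ 1`;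
the additive subgroup of `ℝ` it generates is `τ_*(K₀(A))`. -/
def projectionTraces (A : Type*) [CStarAlgebra A] (τ : A →ₗ[ℂ] ℂ) : Set ℝ :=
  {t : ℝ | ∃ (n : ℕ) (p : Matrix (Fin n) (Fin n) A), 0 < n ∧
    p * p = p ∧ star p = p ∧ (∑ i, τ (p i i)) = (t : ℂ)}

/-!
A *-homomorphism `A → M_k(A)` pulls the trace of `M_k(A)` back to a positive trace on `A`, which by
uniqueness is `s • τ` for some `s ≥ 0`; amplified to matrices it sends projections to projections
and multiplies their traces by `s`, so `s E_A ⊆ E_A`. An isomorphism `φ : A ≃ pM_n(A)p` gives this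
for `s = t := (τ ⊗ Tr)(p)`. For the reverse inclusion, simplicity produces columns
`v₁, …, v_k ∈ A ^ n` with `p v_l = v_l` and `∑ v_l* v_l = 1`; then
`a ↦ (φ⁻¹(v_l a v_{l'}*))` is a *-homomorphism `A → M_k(A)` for which `s = t⁻¹`.
-/

section SimpleRing

/-- The topological closure of a two-sided ideal, as a two-sided ideal. -/
def twoSidedIdealClosure {R : Type*} [NonUnitalNonAssocRing R] [TopologicalSpace R]
    [IsTopologicalRing R] (I : TwoSidedIdeal R) : TwoSidedIdeal R :=
  .mk' (closure I) (subset_closure I.zero_mem)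
    (fun hx hy => map_mem_closure₂ continuous_add hx hy fun _ ha _ hb => I.add_mem ha hb)
    (fun hx => map_mem_closure continuous_neg hx fun _ ha => I.neg_mem ha)
    (fun {x _} hy => map_mem_closure (continuous_const_mul x) hy
      fun a ha => I.mul_mem_left x a ha)
    (fun {_ y} hx => map_mem_closure (f := (· * y)) (continuous_mul_const y) hx
      fun a ha => I.mul_mem_right a y ha)

lemma coe_twoSidedIdealClosure {R : Type*} [NonUnitalNonAssocRing R] [TopologicalSpace R]
    [IsTopologicalRing R] (I : TwoSidedIdeal R) :
    (twoSidedIdealClosure I : Set R) = closure (I : Set R) :=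
  TwoSidedIdeal.coe_mk' _ _ _ _ _ _

lemma twoSidedIdeal_eq_top_of_closure_eq_top {R : Type*} [NormedRing R]
    [HasSummableGeomSeries R] {I : TwoSidedIdeal R} (hI : twoSidedIdealClosure I = ⊤) :
    I = ⊤ := by
  have one_mem_closure : (1 : R) ∈ closure (I : Set R) := by
    rw [← coe_twoSidedIdealClosure, hI]
    exact TwoSidedIdeal.mem_top _
  obtain ⟨_, ⟨u, rfl⟩, hu⟩ :=
    mem_closure_iff.1 one_mem_closure {x | IsUnit x} Units.isOpen isUnit_one
  exact I.one_mem_iff.1 (u.inv_mul ▸ I.mul_mem_left _ _ hu)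

lemma IsSimpleCStarAlgebra.isSimpleRing {A : Type*} [CStarAlgebra A] [Nontrivial A]
    (hA : IsSimpleCStarAlgebra A) : IsSimpleRing A := by
  refine .of_eq_bot_or_eq_top fun I => ?_
  have hI : IsClosed (twoSidedIdealClosure I : Set A) :=
    coe_twoSidedIdealClosure I ▸ isClosed_closure
  refine (hA _ hI).imp (fun h => ?_) twoSidedIdeal_eq_top_of_closure_eq_top
  rw [eq_bot_iff, ← h, ← SetLike.coe_subset_coe, coe_twoSidedIdealClosure]
  exact subset_closure

open scoped Pointwise in
lemma exists_sum_mul_mul_of_mem_span_singleton {R : Type*} [Ring R] {x z : R}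
    (hz : z ∈ TwoSidedIdeal.span {x}) :
    ∃ (k : ℕ) (a b : Fin k → R), ∑ l, a l * x * b l = z := by
  rw [TwoSidedIdeal.mem_span_iff_mem_addSubgroup_closure] at hz
  induction hz using AddSubgroup.closure_induction with
  | mem z hz =>
    obtain ⟨_, ⟨a, -, _, rfl, rfl⟩, b, -, rfl⟩ := hz
    exact ⟨1, fun _ => a, fun _ => b, by simp⟩
  | zero => exact ⟨0, 0, 0, by simp⟩
  | add _ _ _ _ hy hz =>
    obtain ⟨k, a, b, rfl⟩ := hy
    obtain ⟨m, c, d, rfl⟩ := hz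
    exact ⟨k + m, Fin.append a c, Fin.append b d, by simp [Fin.sum_univ_add]⟩
  | neg _ _ hy =>
    obtain ⟨k, a, b, rfl⟩ := hy
    exact ⟨k, -a, b, by simp⟩

lemma exists_sum_mul_mul_eq_one {R : Type*} [Ring R] [IsSimpleRing R] {x : R} (hx : x ≠ 0) :
    ∃ (k : ℕ) (a b : Fin k → R), ∑ l, a l * x * b l = 1 :=
  exists_sum_mul_mul_of_mem_span_singleton <|
    IsSimpleRing.one_mem_of_ne_zero_mem _ hx (TwoSidedIdeal.subset_span rfl)

end SimpleRing

section Positivity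

variable {A : Type*} [CStarAlgebra A]

lemma exists_inner_smul_self_eq_one [PartialOrder A] [StarOrderedRing A] {E : Type*}
    [AddCommGroup E] [Module ℂ E] [SMul A E] [Norm E] [CStarModule A E] {x y : E}
    (hxy : inner A x y = 1) : ∃ d : A, inner A (d • y) (d • y) = 1 := by
  have one_le : 1 ≤ ‖x‖ ^ 2 • inner A y y := by
    have hyx : inner A y x = 1 := by rw [← CStarModule.star_inner, hxy, star_one]
    simpa only [hxy, hyx, one_mul] using
      CStarModule.inner_mul_inner_swap_le (A := A) (x := x) (y := y)
  set u := ‖x‖ ^ 2 • inner A y y with hu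
  set e := u ^ (-(1 / 2) : ℝ)
  have he : star e = e := (IsSelfAdjoint.of_nonneg CFC.rpow_nonneg).star_eq
  have heu : e * u * e = 1 :=
    CFC.conjugate_rpow_neg_one_half u (.of_le isStrictlyPositive_one one_le)
  refine ⟨‖x‖ • e, ?_⟩
  rw [CStarModule.inner_op_smul_right, CStarModule.inner_op_smul_left, ← heu, hu]
  simp only [star_smul, star_trivial, he, smul_mul_assoc, mul_smul_comm, smul_smul, sq, mul_assoc]

open scoped WithCStarModule in
lemma exists_sum_mul_mul_star_eq_one [PartialOrder A] [StarOrderedRing A] [IsSimpleRing A]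
    {h : A} (h_nonneg : 0 ≤ h) (h_ne : h ≠ 0) :
    ∃ (k : ℕ) (b : Fin k → A), ∑ l, b l * h * star (b l) = 1 := by
  obtain ⟨r, rfl⟩ := CStarAlgebra.nonneg_iff_eq_mul_star_self.1 h_nonneg
  obtain ⟨k, a, c, hac⟩ := exists_sum_mul_mul_eq_one h_ne
  let x : C⋆ᵐᵒᵈ(A, Fin k → A) := (WithCStarModule.equiv ..).symm fun l => star (c l) * r
  let y : C⋆ᵐᵒᵈ(A, Fin k → A) := (WithCStarModule.equiv ..).symm fun l => a l * r
  have hxy : inner A x y = 1 := by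
    rw [← hac]
    simp [x, y, WithCStarModule.pi_inner, WithCStarModule.inner_def, mul_assoc]
  obtain ⟨d, hd⟩ := exists_inner_smul_self_eq_one hxy
  refine ⟨k, fun l => d * a l, ?_⟩
  rw [← hd]
  simp [y, WithCStarModule.pi_inner, WithCStarModule.inner_def, mul_assoc, Finset.mul_sum,
    Finset.sum_mul]

lemma eq_zero_of_conjTranspose_mul_self_diag_eq_zero {R : Type*} [NonUnitalNormedRing R]
    [StarRing R] [CStarRing R] [PartialOrder R] [StarOrderedRing R] {m n : Type*} [Fintype m]
    {x : Matrix m n R} (hx : ∀ j, (xᴴ * x) j j = 0) : x = 0 := by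
  ext i j
  have sum_eq_zero : ∑ i, star (x i j) * x i j = 0 := hx j
  rw [Finset.sum_eq_zero_iff_of_nonneg fun _ _ => star_mul_self_nonneg _] at sum_eq_zero
  exact CStarRing.star_mul_self_eq_zero_iff _ |>.1 (sum_eq_zero i (Finset.mem_univ i))

lemma exists_sum_mul_diag_mul_star_eq_one [IsSimpleRing A] {n : Type*} [Fintype n]
    {p : Matrix n n A} (hp : IsStarProjection p) (p_ne : p ≠ 0) :
    ∃ (j : n) (k : ℕ) (b : Fin k → A), ∑ l, b l * p j j * star (b l) = 1 := by
  let _ := CStarAlgebra.spectralOrder A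
  have := CStarAlgebra.spectralOrderedRing A
  have conjTranspose_mul_self : pᴴ * p = p := by
    rw [← Matrix.star_eq_conjTranspose, hp.isSelfAdjoint.star_eq, hp.isIdempotentElem.eq]
  obtain ⟨j, hj⟩ : ∃ j, p j j ≠ 0 := by
    by_contra! h
    exact p_ne (eq_zero_of_conjTranspose_mul_self_diag_eq_zero (by rwa [conjTranspose_mul_self]))
  have diag_nonneg : 0 ≤ p j j := by
    rw [← conjTranspose_mul_self]
    exact Finset.sum_nonneg fun i _ => star_mul_self_nonneg (p i j)
  exact ⟨j, exists_sum_mul_mul_star_eq_one diag_nonneg hj⟩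

end Positivity

section MatrixHom

lemma exists_lift_of_range_subset {R A B C : Type*} [CommSemiring R]
    [NonUnitalSemiring A] [Star A] [Module R A] [NonUnitalSemiring B] [Star B] [Module R B]
    [NonUnitalSemiring C] [Star C] [Module R C]
    {f : A →⋆ₙₐ[R] B} (hf : Function.Injective f) {g : C →⋆ₙₐ[R] B}
    (hg : ∀ c, g c ∈ Set.range f) : ∃ h : C →⋆ₙₐ[R] A, ∀ c, f (h c) = g c := by
  let e := StarAlgEquiv.ofInjective' f hf
  let g' := NonUnitalStarAlgHom.codRestrict g (NonUnitalStarAlgHom.range f) hg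
  refine ⟨(e.symm : _ →⋆ₙₐ[R] A).comp g', fun c => ?_⟩
  exact congrArg Subtype.val (e.apply_symm_apply (g' c))

variable {R A B S : Type*} [CommSemiring R] [NonUnitalSemiring A] [Star A] [Module R A]
  [NonUnitalSemiring B] [Star B] [Module R B] [Semiring S]
  {κ n : Type*} [Fintype κ] [Fintype n] [DecidableEq n]

/-- Entrywise application of a *-homomorphism to square matrices, as `CStarMatrix.mapₙₐ` but for
`Matrix`. -/
@[simps]
def matrixMap (φ : A →⋆ₙₐ[R] B) : Matrix κ κ A →⋆ₙₐ[R] Matrix κ κ B where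
  toFun x := x.map φ
  map_smul' c x := by ext; simp
  map_zero' := by ext; simp
  map_add' x y := by ext; simp
  map_mul' x y := by ext; simp [Matrix.mul_apply]
  map_star' x := by ext; simp [map_star]

lemma matrixMap_injective {φ : A →⋆ₙₐ[R] B} (hφ : Function.Injective φ) :
    Function.Injective (matrixMap (κ := κ) φ) :=
  Matrix.map_injective hφ

lemma mem_range_matrixMap {φ : A →⋆ₙₐ[R] B} {x : Matrix κ κ B}
    (hx : ∀ i j, x i j ∈ Set.range φ) : x ∈ Set.range (matrixMap (κ := κ) φ) := by
  choose y hy using hx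
  exact ⟨.of y, Matrix.ext hy⟩

lemma conj_single_mul_conj_single {p : Matrix n n S} (hp : IsIdempotentElem p) (j : n) (x y : S) :
    (p * .single j j x * p) * (p * .single j j y * p) = p * .single j j (x * p j j * y) * p := by
  rw [← Matrix.single_mul_mul_single]
  calc _ = p * .single j j x * (p * p) * (.single j j y * p) := by simp only [mul_assoc]
    _ = _ := by rw [hp.eq]; simp only [mul_assoc]

/-- For a projection `p` and `∑ l, b l * p j j * star (b l) = 1`, the columns
`v l = p * e_j * star (b l)` of `p` satisfy `∑ l, (v l)ᴴ * v l = 1`; this is the *-homomorphism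
`a ↦ (v l * a * (v l')ᴴ)_{l, l'}`, whose entries lie in the corner of `p`. -/
def cornerHom [StarRing S] [Algebra R S] {p : Matrix n n S} (hp : IsStarProjection p) (j : n)
    (b : κ → S) (hb : ∑ l, b l * p j j * star (b l) = 1) : S →⋆ₙₐ[R] Matrix κ κ (Matrix n n S) where
  toFun a := .of fun l l' => p * Matrix.single j j (star (b l) * a * b l') * p
  map_smul' c a := by ext1; simp [← Matrix.smul_single]
  map_zero' := by ext1; simp
  map_add' x y := by ext1; simp [mul_add, add_mul, Matrix.single_add]
  map_mul' x y := by
    ext1 l l'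
    have sum_eq : ∑ m, star (b l) * x * b m * p j j * (star (b m) * y * b l') =
        star (b l) * (x * y) * b l' := by
      calc _ = star (b l) * x * (∑ m, b m * p j j * star (b m)) * (y * b l') := by
            simp only [Finset.mul_sum, Finset.sum_mul, mul_assoc]
        _ = _ := by rw [hb]; simp only [mul_one, mul_assoc]
    simp only [Matrix.mul_apply, Matrix.of_apply, conj_single_mul_conj_single hp.isIdempotentElem,
      ← Finset.mul_sum, ← Finset.sum_mul, ← sum_eq]
    congr 2
    exact map_sum (Matrix.singleAddMonoidHom j j) _ _
  map_star' x := by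
    ext1 l l'
    have star_single (y : S) : star (Matrix.single j j y) = .single j j (star y) :=
      Matrix.conjTranspose_single ..
    simp only [Matrix.star_apply, Matrix.of_apply, star_mul, star_single, star_star,
      hp.isSelfAdjoint.star_eq, mul_assoc]

end MatrixHom

section MatrixComp

variable {A κ ι : Type*} [Fintype κ] [Fintype ι]

lemma trace_trace [AddCommMonoid A] (x : Matrix κ κ (Matrix ι ι A)) :
    x.trace.trace = ∑ i, (x i i).trace :=
  Matrix.trace_sum ..

lemma isStarProjection_comp [NonUnitalSemiring A] [StarRing A] {q : Matrix κ κ (Matrix ι ι A)}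
    (hq : IsStarProjection q) : IsStarProjection (Matrix.comp κ κ ι ι A q) where
  isIdempotentElem := hq.isIdempotentElem.map (Matrix.compRingEquiv κ ι A)
  isSelfAdjoint := by
    rw [IsSelfAdjoint, Matrix.star_eq_conjTranspose, Matrix.conjTranspose_comp',
      ← Matrix.star_eq_conjTranspose, hq.isSelfAdjoint.star_eq]

lemma trace_comp [AddCommMonoid A] (x : Matrix κ κ (Matrix ι ι A)) :
    (Matrix.comp κ κ ι ι A x).trace = x.trace.trace := by
  rw [trace_trace, Matrix.trace, Fintype.sum_prod_type]
  rfl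

end MatrixComp

section Trace

variable {A : Type*} [CStarAlgebra A] {τ : A →ₗ[ℂ] ℂ} {ι κ : Type*} [Fintype ι] [Fintype κ]

lemma IsTracialState.trace_mul_comm (hτ : IsTracialState A τ) (x : Matrix ι κ A)
    (y : Matrix κ ι A) : τ (x * y).trace = τ (y * x).trace := by
  simp only [Matrix.trace, Matrix.diag_apply, Matrix.mul_apply, map_sum]
  rw [Finset.sum_comm]
  simp only [hτ.tracial]

lemma IsTracialState.trace_star_mul_self_nonneg (hτ : IsTracialState A τ) (x : Matrix ι ι A) :
    0 ≤ τ (star x * x).trace := by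
  simp only [Matrix.trace, Matrix.diag_apply, Matrix.mul_apply, map_sum]
  exact Finset.sum_nonneg fun i _ => Finset.sum_nonneg fun j _ => hτ.nonneg (x j i)

lemma IsTracialState.trace_nonneg (hτ : IsTracialState A τ) {p : Matrix ι ι A}
    (hp : IsStarProjection p) : 0 ≤ τ p.trace := by
  simpa only [hp.isSelfAdjoint.star_eq, hp.isIdempotentElem.eq] using
    hτ.trace_star_mul_self_nonneg p

lemma IsTracialState.eq_smul_of_unique (hτ : IsTracialState A τ)
    (huniq : ∀ σ : A →ₗ[ℂ] ℂ, IsTracialState A σ → σ = τ) {σ : A →ₗ[ℂ] ℂ}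
    (σ_nonneg : ∀ a, 0 ≤ σ (star a * a)) (σ_tracial : ∀ a b, σ (a * b) = σ (b * a)) :
    σ = σ 1 • τ := by
  have σ_one_nonneg : 0 ≤ σ 1 := by simpa using σ_nonneg 1
  have one_add_pos : 0 < 1 + σ 1 := by positivity
  -- Adding `τ` before normalizing covers the case `σ 1 = 0`.
  have isTracialState : IsTracialState A ((1 + σ 1)⁻¹ • (τ + σ)) :=
    { map_one := by simp [hτ.map_one, ← mul_one_add, one_add_pos.ne']
      nonneg := fun a => mul_nonneg (inv_nonneg.2 one_add_pos.le)
        (add_nonneg (hτ.nonneg a) (σ_nonneg a))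
      tracial := fun a b => by simp [hτ.tracial a b, σ_tracial a b] }
  have add_eq : τ + σ = (1 + σ 1) • τ :=
    (inv_smul_eq_iff₀ one_add_pos.ne').1 (huniq _ isTracialState)
  rwa [add_smul, one_smul, add_right_inj] at add_eq

lemma trace_map_eq_of_unique (hτ : IsTracialState A τ)
    (huniq : ∀ σ : A →ₗ[ℂ] ℂ, IsTracialState A σ → σ = τ) (φ : A →⋆ₙₐ[ℂ] Matrix ι ι A) (a : A) :
    τ (φ a).trace = τ (φ 1).trace * τ a := by
  let σ : A →ₗ[ℂ] ℂ := τ ∘ₗ Matrix.traceLinearMap ι ℂ A ∘ₗ (φ : A →ₗ[ℂ] Matrix ι ι A)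
  have hσ : σ = σ 1 • τ := hτ.eq_smul_of_unique huniq
    (fun a => by simpa [σ, map_star] using hτ.trace_star_mul_self_nonneg (φ a))
    (fun a b => by simpa [σ] using hτ.trace_mul_comm (φ a) (φ b))
  exact congrArg (· a) hσ

lemma trace_trace_matrixMap {φ : A →⋆ₙₐ[ℂ] Matrix ι ι A} {s : ℂ}
    (hφ : ∀ a, τ (φ a).trace = s * τ a) (x : Matrix κ κ A) :
    τ (matrixMap φ x).trace.trace = s * τ x.trace := by
  calc τ (matrixMap φ x).trace.trace = ∑ i, τ (φ (x i i)).trace := by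
        rw [trace_trace, map_sum]; rfl
    _ = s * τ x.trace := by simp only [hφ, ← Finset.mul_sum, ← map_sum]; rfl

lemma IsTracialState.trace_trace_cornerHom [DecidableEq ι] (hτ : IsTracialState A τ)
    {p : Matrix ι ι A} (hp : IsStarProjection p) (j : ι) {b : κ → A}
    (hb : ∑ l, b l * p j j * star (b l) = 1) (a : A) :
    τ (cornerHom (R := ℂ) hp j b hb a).trace.trace = τ a := by
  have trace_conj_single (x : A) : τ (p * Matrix.single j j x * p).trace = τ (x * p j j) := by
    rw [mul_assoc, hτ.trace_mul_comm, mul_assoc, hp.isIdempotentElem.eq, Matrix.trace_single_mul,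
      smul_eq_mul]
  calc τ (cornerHom (R := ℂ) hp j b hb a).trace.trace
      = ∑ l, τ (p * Matrix.single j j (star (b l) * a * b l) * p).trace := by
        rw [trace_trace, map_sum]; rfl
    _ = ∑ l, τ (a * (b l * p j j * star (b l))) := by
        refine Finset.sum_congr rfl fun l _ => ?_
        rw [trace_conj_single, mul_assoc, mul_assoc, hτ.tracial]
        simp only [mul_assoc]
    _ = τ a := by rw [← map_sum, ← Finset.mul_sum, hb, mul_one]

end Trace

section ProjectionTraces

variable {A : Type*} [CStarAlgebra A] {τ : A →ₗ[ℂ] ℂ} {ι : Type*} [Fintype ι]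

lemma mem_closure_projectionTraces {p : Matrix ι ι A} (hp : IsStarProjection p) {t : ℝ}
    (ht : τ p.trace = t) : t ∈ AddSubgroup.closure (projectionTraces A τ) := by
  rcases isEmpty_or_nonempty ι with _ | _
  · have t_eq_zero : t = 0 := by simpa [Matrix.trace] using ht.symm
    exact t_eq_zero ▸ zero_mem _
  · let e := Fintype.equivFin ι
    refine AddSubgroup.subset_closure ⟨_, p.submatrix e.symm e.symm, Fintype.card_pos, ?_, ?_, ?_⟩
    · rw [Matrix.submatrix_mul_equiv, hp.isIdempotentElem.eq]
    · rw [Matrix.star_eq_conjTranspose, Matrix.conjTranspose_submatrix,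
        ← Matrix.star_eq_conjTranspose, hp.isSelfAdjoint.star_eq]
    · rw [← ht, Matrix.trace, map_sum]
      exact e.symm.sum_comp fun i => τ (p i i)

lemma IsTracialState.one_mem_closure_projectionTraces (hτ : IsTracialState A τ) :
    1 ∈ AddSubgroup.closure (projectionTraces A τ) :=
  mem_closure_projectionTraces (ι := Fin 1) (.one _) (by simp [hτ.map_one])

lemma mul_mem_closure_projectionTraces {φ : A →⋆ₙₐ[ℂ] Matrix ι ι A} {s : ℝ}
    (hφ : ∀ a, τ (φ a).trace = s * τ a) {x : ℝ}
    (hx : x ∈ AddSubgroup.closure (projectionTraces A τ)) :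
    s * x ∈ AddSubgroup.closure (projectionTraces A τ) := by
  suffices AddSubgroup.closure (projectionTraces A τ) ≤
      (AddSubgroup.closure (projectionTraces A τ)).comap (AddMonoidHom.mulLeft s) from this hx
  rw [AddSubgroup.closure_le]
  rintro x ⟨m, q, -, hq_mul, hq_star, hq_trace⟩
  have hq : IsStarProjection q := ⟨hq_mul, hq_star⟩
  refine mem_closure_projectionTraces (isStarProjection_comp (hq.map (matrixMap φ))) ?_
  rw [trace_comp, trace_trace_matrixMap hφ, Matrix.trace, map_sum]
  simp [hq_trace]

lemma mem_IMplus_of_mul_mem {E : AddSubgroup ℝ} (one_mem : 1 ∈ E) {t : ℝ} (t_pos : 0 < t)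
    (mul_mem : ∀ x ∈ E, t * x ∈ E) (inv_mul_mem : ∀ x ∈ E, t⁻¹ * x ∈ E) : t ∈ IMplus E := by
  refine ⟨t_pos, by simpa using mul_mem 1 one_mem, by simpa using inv_mul_mem 1 one_mem, ?_⟩
  exact (Set.image_subset_iff.2 mul_mem).antisymm fun x hx =>
    ⟨t⁻¹ * x, inv_mul_mem x hx, mul_inv_cancel_left₀ t_pos.ne' x⟩

end ProjectionTraces

section Corner

lemma map_one_eq_of_range_eq_corner {M N F : Type*} [MulOneClass M] [Semigroup N] [FunLike F M N]
    [MulHomClass F M N] {p : N} (hp : IsIdempotentElem p) {φ : F}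
    (hφ : Set.range φ = {x | p * x * p = x}) : φ 1 = p := by
  obtain ⟨e, he⟩ : p ∈ Set.range φ := hφ ▸ (by rw [hp.eq, hp.eq] : p * p * p = p)
  have map_one_mem : p * φ 1 * p = φ 1 := hφ.subset ⟨1, rfl⟩
  rw [← map_one_mem, ← he, ← map_mul, ← map_mul, mul_one, map_mul, he, hp.eq]

variable {A : Type*} [CStarAlgebra A] {n : ℕ} {p : Matrix (Fin n) (Fin n) A}

/-- The bundled *-homomorphism underlying an isomorphism of `A` onto a corner. -/
def IsCornerIso.toHom {φ : A → Matrix (Fin n) (Fin n) A} (hφ : IsCornerIso A p φ) :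
    A →⋆ₙₐ[ℂ] Matrix (Fin n) (Fin n) A where
  toFun := φ
  map_smul' := hφ.2.2.2.1
  map_zero' := by simpa using hφ.2.2.2.1 0 0
  map_add' := hφ.2.1
  map_mul' := hφ.2.2.1
  map_star' := hφ.2.2.2.2.1

lemma IsCornerIso.toHom_injective {φ : A → Matrix (Fin n) (Fin n) A} (hφ : IsCornerIso A p φ) :
    Function.Injective hφ.toHom :=
  hφ.1

lemma IsCornerIso.range_toHom {φ : A → Matrix (Fin n) (Fin n) A} (hφ : IsCornerIso A p φ) :
    Set.range hφ.toHom = {x | p * x * p = x} :=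
  hφ.2.2.2.2.2

lemma exists_hom_mul_trace_eq [IsSimpleRing A] {τ : A →ₗ[ℂ] ℂ} (hτ : IsTracialState A τ)
    {ι : Type*} [Fintype ι] {p : Matrix ι ι A} (hp : IsStarProjection p) (p_ne : p ≠ 0)
    {φ : A →⋆ₙₐ[ℂ] Matrix ι ι A}
    (φ_inj : Function.Injective φ) (hφ : {x | p * x * p = x} ⊆ Set.range φ) {t : ℂ}
    (φ_trace : ∀ a, τ (φ a).trace = t * τ a) :
    ∃ (k : ℕ) (ρ : A →⋆ₙₐ[ℂ] Matrix (Fin k) (Fin k) A), ∀ a, t * τ (ρ a).trace = τ a := by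
  classical
  obtain ⟨j, k, b, hb⟩ := exists_sum_mul_diag_mul_star_eq_one hp p_ne
  have cornerHom_mem_range (a : A) : cornerHom (R := ℂ) hp j b hb a ∈ Set.range (matrixMap φ) := by
    refine mem_range_matrixMap fun l l' => hφ ?_
    change p * (p * _ * p) * p = p * _ * p
    simp only [← mul_assoc, hp.isIdempotentElem.eq]
    simp only [mul_assoc, hp.isIdempotentElem.eq]
  obtain ⟨ρ, hρ⟩ := exists_lift_of_range_subset (matrixMap_injective φ_inj) cornerHom_mem_range
  refine ⟨k, ρ, fun a => ?_⟩
  rw [← trace_trace_matrixMap φ_trace, hρ, hτ.trace_trace_cornerHom]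

end Corner

/-- `F(A) ⊆ IM₊(E_A)`, where `E_A` is the additive subgroup of `ℝ`
generated by the traces of projections (i.e. `τ_*(K₀(A))`).  In particular every
`λ ∈ F(A)` satisfies `λ ∈ E_A`, `λ⁻¹ ∈ E_A`, `λ > 0` and `λ • E_A = E_A`. -/
theorem fundamentalGroup_subset_IMplus
    (A : Type*) [CStarAlgebra A]
    (hA : IsSimpleCStarAlgebra A)
    (τ : A →ₗ[ℂ] ℂ) (hτ : IsTracialState A τ)
    (huniq : ∀ σ : A →ₗ[ℂ] ℂ, IsTracialState A σ → σ = τ) :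
    fundamentalGroup A τ ⊆ IMplus (AddSubgroup.closure (projectionTraces A τ)) ∧
    (∀ l ∈ fundamentalGroup A τ,
      (fun x => l * x) '' (AddSubgroup.closure (projectionTraces A τ) : Set ℝ) =
        (AddSubgroup.closure (projectionTraces A τ) : Set ℝ)) ∧
    (∀ l ∈ fundamentalGroup A τ, 0 < l ∧
      l ∈ AddSubgroup.closure (projectionTraces A τ) ∧
      l⁻¹ ∈ AddSubgroup.closure (projectionTraces A τ)) := by
  have : Nontrivial A := ⟨1, 0, fun h => by simpa [h] using hτ.map_one⟩
  have := hA.isSimpleRing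
  have key : fundamentalGroup A τ ⊆ IMplus (AddSubgroup.closure (projectionTraces A τ)) := by
    rintro t ⟨n, p, -, hp_mul, hp_star, ⟨φ, hφ⟩, ht⟩
    have hp : IsStarProjection p := ⟨hp_mul, hp_star⟩
    have p_trace : τ p.trace = t := by rw [← ht, Matrix.trace, map_sum]; rfl
    have φ_one : hφ.toHom 1 = p := map_one_eq_of_range_eq_corner hp_mul hφ.range_toHom
    have φ_trace (a : A) : τ (hφ.toHom a).trace = t * τ a := by
      rw [trace_map_eq_of_unique hτ huniq, φ_one, p_trace]
    have p_ne : p ≠ 0 := φ_one ▸ (map_ne_zero_iff _ hφ.toHom_injective).2 one_ne_zero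
    obtain ⟨k, ρ, hρ⟩ :=
      exists_hom_mul_trace_eq hτ hp p_ne hφ.toHom_injective hφ.range_toHom.superset φ_trace
    have t_ne : (t : ℂ) ≠ 0 := left_ne_zero_of_mul_eq_one ((hρ 1).trans hτ.map_one)
    have t_nonneg : 0 ≤ t := Complex.zero_le_real.1 (p_trace ▸ hτ.trace_nonneg hp)
    have t_pos : 0 < t := t_nonneg.lt_of_ne' (mod_cast t_ne)
    have ρ_trace (a : A) : τ (ρ a).trace = (t⁻¹ : ℝ) * τ a := by
      rw [← hρ a, Complex.ofReal_inv, inv_mul_cancel_left₀ t_ne]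
    exact mem_IMplus_of_mul_mem hτ.one_mem_closure_projectionTraces t_pos
      (fun _ => mul_mem_closure_projectionTraces φ_trace)
      (fun _ => mul_mem_closure_projectionTraces ρ_trace)
  exact ⟨key, fun l hl => (key hl).2.2.2,
    fun l hl => ⟨(key hl).1, (key hl).2.1, (key hl).2.2.1⟩⟩
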